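/- arXiv:1611.07388 — 7 statements merged into one kernel-verified Lean document; each statement's English description precedes it below -/
import Mathlib

section
/- Assume (H₀*) and (H₂) hold, and suppose θ*(ε) ≠ ∅ for all sufficiently small ε > 0. Then every cluster point of optimal solutions of the perturbed LP as ε ↓ 0 belongs to θ₁; that is, for every sequence εₖ > 0 with εₖ → 0 and every sequence xₖ ∈ θ*(εₖ) with xₖ → x in ℝⁿ, one has x ∈ θ₁ (i.e., limsup_{ε↓0} θ*(ε) ⊂ θ₁). -/
/-!
If `xₖ ∈ θ(εₖ)` and `xₖ → x`, then `x ∈ θ(0)` by continuity, and the difference quotients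
`yₖ = (xₖ - x) / εₖ` satisfy `A⁰ yₖ = b¹ - A¹ xₖ`. An index `j ∉ J₀` has `xⱼ = 0`, so `(yₖ)ⱼ ≥ 0`.
Hence `b¹ - A¹ xₖ` lies in the image under `A⁰` of the polyhedral cone
`K = {y | yⱼ ≥ 0 for j ∉ J₀}`. The `yₖ` need not converge, but a linear image of a polyhedral cone is
closed (`isClosed_image_polyhedral`), so the limit `b¹ - A¹ x` is `A⁰ x¹` for some `x¹ ∈ K`.
-/


open Filter Topology Set Matrix

noncomputable section

/-- Feasible set `θ(ε)` of the perturbed LP: `(A⁰+εA¹)x = b⁰+εb¹`, `x ≥ 0`. -/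
def theta (n m : ℕ) (A0 A1 : Matrix (Fin m) (Fin n) ℝ) (b0 b1 : Fin m → ℝ) (ε : ℝ) :
    Set (Fin n → ℝ) :=
  {x | (A0 + ε • A1) *ᵥ x = b0 + ε • b1 ∧ ∀ i, 0 ≤ x i}

/-- Optimal value `F*(ε)` of the perturbed LP. -/
def Fstar (n m : ℕ) (c0 c1 : Fin n → ℝ) (A0 A1 : Matrix (Fin m) (Fin n) ℝ)
    (b0 b1 : Fin m → ℝ) (ε : ℝ) : ℝ :=
  sSup ((fun x => (c0 + ε • c1) ⬝ᵥ x) '' theta n m A0 A1 b0 b1 ε)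

/-- Optimal solution set `θ*(ε)` of the perturbed LP. -/
def thetaStar (n m : ℕ) (c0 c1 : Fin n → ℝ) (A0 A1 : Matrix (Fin m) (Fin n) ℝ)
    (b0 b1 : Fin m → ℝ) (ε : ℝ) : Set (Fin n → ℝ) :=
  {x ∈ theta n m A0 A1 b0 b1 ε |
    (c0 + ε • c1) ⬝ᵥ x = Fstar n m c0 c1 A0 A1 b0 b1 ε}

/-- `J₀ = {i : ∃ x ∈ θ(0), xᵢ > 0}`. -/
def J0 (n m : ℕ) (A0 A1 : Matrix (Fin m) (Fin n) ℝ) (b0 b1 : Fin m → ℝ) : Set (Fin n) :=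
  {i | ∃ x ∈ theta n m A0 A1 b0 b1 0, 0 < x i}

/-- `Θ₁ = {(x⁰,x¹) : x⁰ ∈ θ(0), A⁰x¹ + A¹x⁰ = b¹, x¹ⱼ ≥ 0 ∀ j ∉ J₀}`. -/
def Theta1 (n m : ℕ) (A0 A1 : Matrix (Fin m) (Fin n) ℝ) (b0 b1 : Fin m → ℝ) :
    Set ((Fin n → ℝ) × (Fin n → ℝ)) :=
  {p | p.1 ∈ theta n m A0 A1 b0 b1 0 ∧ A0 *ᵥ p.2 + A1 *ᵥ p.1 = b1 ∧
    ∀ j ∉ J0 n m A0 A1 b0 b1, 0 ≤ p.2 j}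

/-- `θ₁ = {x⁰ : ∃ x¹, (x⁰,x¹) ∈ Θ₁}`, the feasible set of the limiting LP. -/
def theta1 (n m : ℕ) (A0 A1 : Matrix (Fin m) (Fin n) ℝ) (b0 b1 : Fin m → ℝ) :
    Set (Fin n → ℝ) :=
  {x0 | ∃ x1, (x0, x1) ∈ Theta1 n m A0 A1 b0 b1}

/-- `F₁*`, the optimal value of the limiting LP. -/
def F1 (n m : ℕ) (c0 : Fin n → ℝ) (A0 A1 : Matrix (Fin m) (Fin n) ℝ)
    (b0 b1 : Fin m → ℝ) : ℝ :=
  sSup ((fun x0 => c0 ⬝ᵥ x0) '' theta1 n m A0 A1 b0 b1)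

/-- `θ₁*`, the optimal solution set of the limiting LP. -/
def theta1Star (n m : ℕ) (c0 : Fin n → ℝ) (A0 A1 : Matrix (Fin m) (Fin n) ℝ)
    (b0 b1 : Fin m → ℝ) : Set (Fin n → ℝ) :=
  {x0 ∈ theta1 n m A0 A1 b0 b1 | c0 ⬝ᵥ x0 = F1 n m c0 A0 A1 b0 b1}

/-- `θ̃₁`, feasible set of the limiting LP with full sign restriction `x¹ ≥ 0`. -/
def thetaTilde1 (n m : ℕ) (A0 A1 : Matrix (Fin m) (Fin n) ℝ) (b0 b1 : Fin m → ℝ) :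
    Set (Fin n → ℝ) :=
  {x0 ∈ theta n m A0 A1 b0 b1 0 | ∃ x1 : Fin n → ℝ,
    A0 *ᵥ x1 + A1 *ᵥ x0 = b1 ∧ ∀ j, 0 ≤ x1 j}

/-- A linear image, in a finite-dimensional space, of a cone cut out by finitely many linear
inequalities is closed. If every `φ i` vanishes on `ker L`, the inequalities descend to the range
of `L`. Otherwise a kernel direction along which some `φ i` decreases lets every point of the cone
slide, with unchanged image, to a face `φ i = 0`, so the image is a finite union of images of
cones with one inequality fewer. -/
lemma isClosed_image_polyhedral {ι W : Type*} [NormedAddCommGroup W] [NormedSpace ℝ W]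
    [FiniteDimensional ℝ W] (N : ℕ) :
    ∀ {V : Type} [AddCommGroup V] [Module ℝ V] (s : Finset ι) (φ : ι → V →ₗ[ℝ] ℝ)
      (L : V →ₗ[ℝ] W), s.card = N → IsClosed (L '' {y | ∀ i ∈ s, 0 ≤ φ i y}) := by
  classical
  induction N with
  | zero =>
    intro V _ _ s φ L hs
    obtain rfl := Finset.card_eq_zero.mp hs
    have : L '' {y | ∀ i ∈ (∅ : Finset ι), 0 ≤ φ i y} = (LinearMap.range L : Set W) := by
      ext w; simp
    rw [this]
    exact Submodule.closed_of_finiteDimensional _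
  | succ N ih =>
    intro V _ _ s φ L hs
    by_cases h : ∃ z, L z = 0 ∧ ∃ i ∈ s, φ i z < 0
    · obtain ⟨z, hz, i₀, hi₀, hneg⟩ := h
      have key : L '' {y | ∀ i ∈ s, 0 ≤ φ i y} =
          ⋃ i ∈ s, (L ∘ₗ (LinearMap.ker (φ i)).subtype) ''
            {y | ∀ j ∈ s.erase i, 0 ≤ (φ j ∘ₗ (LinearMap.ker (φ i)).subtype) y} := by
        ext w
        simp only [mem_iUnion]
        constructor
        · rintro ⟨y, hy, rfl⟩
          -- the first wall reached along `z` minimises the ratio `φ i y / (-φ i z)`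
          obtain ⟨i, hi, hmin⟩ := (s.filter fun i => φ i z < 0).exists_min_image
            (fun i => φ i y / (-φ i z)) ⟨i₀, by simp [hi₀, hneg]⟩
          rw [Finset.mem_filter] at hi
          have hiz : 0 < -φ i z := by linarith [hi.2]
          set t := φ i y / (-φ i z) with ht
          have ht0 : 0 ≤ t := div_nonneg (hy i hi.1) hiz.le
          have hti : t * (-φ i z) = φ i y := div_mul_cancel₀ _ hiz.ne'
          refine ⟨i, hi.1, ⟨y + t • z, ?_⟩, ?_, ?_⟩
          · simp only [LinearMap.mem_ker, map_add, map_smul, smul_eq_mul]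
            linarith
          · intro j hj
            have hj := Finset.mem_of_mem_erase hj
            simp only [LinearMap.comp_apply, Submodule.subtype_apply, map_add, map_smul,
              smul_eq_mul]
            by_cases hjz : φ j z < 0
            · have := hmin j (by simp [hj, hjz])
              rw [le_div_iff₀ (by linarith)] at this
              linarith
            · have := mul_nonneg ht0 (not_lt.mp hjz)
              linarith [hy j hj]
          · simp [hz]
        · rintro ⟨i, hi, ⟨y, hyi⟩, hy, rfl⟩
          refine ⟨y, fun j hj => ?_, rfl⟩
          by_cases hji : j = i
          · subst hji
            exact (LinearMap.mem_ker.mp hyi).ge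
          · exact hy j (Finset.mem_erase.mpr ⟨hji, hj⟩)
      rw [key]
      refine s.finite_toSet.isClosed_biUnion fun i hi => ih _ _ _ ?_
      rw [Finset.card_erase_of_mem hi, hs, Nat.add_sub_cancel]
    · have hker : ∀ z, L z = 0 → ∀ i ∈ s, φ i z = 0 := by
        push Not at h
        intro z hz i hi
        have h1 := h z hz i hi
        have h2 := h (-z) (by simp [hz]) i hi
        rw [map_neg] at h2
        linarith
      obtain ⟨g, hg⟩ := L.rangeRestrict.exists_rightInverse_of_surjective L.range_rangeRestrict
      have hLg : ∀ w : LinearMap.range L, L (g w) = w := fun w =>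
        congrArg Subtype.val (LinearMap.congr_fun hg w)
      have key : L '' {y | ∀ i ∈ s, 0 ≤ φ i y} =
          Subtype.val '' {w : LinearMap.range L | ∀ i ∈ s, 0 ≤ (φ i ∘ₗ g) w} := by
        ext w
        constructor
        · rintro ⟨y, hy, rfl⟩
          refine ⟨⟨L y, y, rfl⟩, fun i hi => ?_, rfl⟩
          have := hker (g ⟨L y, y, rfl⟩ - y) (by rw [map_sub, hLg, sub_self]) i hi
          rw [map_sub, sub_eq_zero] at this
          rw [LinearMap.comp_apply, this]
          exact hy i hi
        · rintro ⟨w, hw, rfl⟩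
          exact ⟨g w, hw, hLg w⟩
      rw [key]
      refine (Submodule.closed_of_finiteDimensional
        (LinearMap.range L)).isClosedEmbedding_subtypeVal.isClosedMap _ ?_
      simp only [ofPred_forall]
      exact isClosed_biInter fun i _ => isClosed_le continuous_const
        (LinearMap.continuous_of_finiteDimensional (E := LinearMap.range L) (φ i ∘ₗ g))

/-- Under (H₀*) and (H₂), together with nonemptiness of `θ*(ε)` for all
small `ε > 0`, every cluster point as `ε ↓ 0` of optimal solutions of the perturbed LP
belongs to `θ₁`, i.e. `limsup_{ε↓0} θ*(ε) ⊆ θ₁`. -/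
theorem limsup_thetaStar_subset_theta1
    {n m : ℕ} (hn : 1 ≤ n) (hm : 1 ≤ m)
    (c0 c1 : Fin n → ℝ) (A0 A1 : Matrix (Fin m) (Fin n) ℝ) (b0 b1 : Fin m → ℝ)
    -- Assumption (H₀*)
    (hH0star : ∃ γ0 > (0 : ℝ), ∃ B : Set (Fin n → ℝ), Bornology.IsBounded B ∧
      ∀ ε ∈ Ioc (0 : ℝ) γ0, thetaStar n m c0 c1 A0 A1 b0 b1 ε ⊆ B)
    -- Assumption (H₂)
    (hH2 : ∃ γ > (0 : ℝ), ∀ ε ∈ Ioo (0 : ℝ) γ, (A0 + ε • A1).rank = m)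
    -- θ*(ε) ≠ ∅ for all sufficiently small ε > 0
    (hne : ∃ γ1 > (0 : ℝ), ∀ ε ∈ Ioo (0 : ℝ) γ1,
      (thetaStar n m c0 c1 A0 A1 b0 b1 ε).Nonempty)
    (x : Fin n → ℝ) (εk : ℕ → ℝ) (xk : ℕ → Fin n → ℝ)
    (hεpos : ∀ k, 0 < εk k) (hεlim : Tendsto εk atTop (𝓝 0))
    (hxk : ∀ k, xk k ∈ thetaStar n m c0 c1 A0 A1 b0 b1 (εk k))
    (hxlim : Tendsto xk atTop (𝓝 x)) :
    x ∈ theta1 n m A0 A1 b0 b1 := by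
  classical
  have hfeas : ∀ k, A0 *ᵥ xk k + εk k • (A1 *ᵥ xk k) = b0 + εk k • b1 := fun k => by
    rw [← (hxk k).1.1, Matrix.add_mulVec, Matrix.smul_mulVec]
  have hA : ∀ A : Matrix (Fin m) (Fin n) ℝ,
      Tendsto (fun k => A *ᵥ xk k) atTop (𝓝 (A *ᵥ x)) := fun A =>
    ((continuous_const.matrix_mulVec continuous_id).tendsto x).comp hxlim
  have hA0x : A0 *ᵥ x = b0 := by
    have h1 := (hA A0).add (hεlim.smul (hA A1))
    have h2 : Tendsto (fun k => b0 + εk k • b1) atTop (𝓝 (b0 + (0 : ℝ) • b1)) :=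
      tendsto_const_nhds.add (hεlim.smul tendsto_const_nhds)
    simp only [hfeas] at h1
    simpa using tendsto_nhds_unique h1 h2
  have hx0 : x ∈ theta n m A0 A1 b0 b1 0 := by
    refine ⟨by simpa using hA0x, fun i => ?_⟩
    exact ge_of_tendsto' ((tendsto_pi_nhds.mp hxlim) i) fun k => (hxk k).1.2 i
  have hclosed := isClosed_image_polyhedral _
    (Finset.univ.filter fun j => j ∉ J0 n m A0 A1 b0 b1)
    (fun j => (LinearMap.proj j : (Fin n → ℝ) →ₗ[ℝ] ℝ)) A0.mulVecLin rfl
  have hlim : Tendsto (fun k => b1 - A1 *ᵥ xk k) atTop (𝓝 (b1 - A1 *ᵥ x)) :=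
    tendsto_const_nhds.sub (hA A1)
  obtain ⟨x1, hx1, hx1'⟩ := hclosed.mem_of_tendsto hlim (Eventually.of_forall fun k => by
    refine ⟨(εk k)⁻¹ • (xk k - x), fun j hj => ?_, ?_⟩
    · have hj : j ∉ J0 n m A0 A1 b0 b1 := by simpa using hj
      have hxj : x j ≤ 0 := not_lt.mp fun h => hj ⟨x, hx0, h⟩
      have := (hxk k).1.2 j
      simp only [LinearMap.proj_apply, Pi.smul_apply, Pi.sub_apply, smul_eq_mul]
      exact mul_nonneg (inv_nonneg.mpr (hεpos k).le) (by linarith)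
    · have h : A0 *ᵥ xk k - b0 = εk k • (b1 - A1 *ᵥ xk k) := by
        rw [smul_sub, sub_eq_sub_iff_add_eq_add, hfeas, add_comm]
      rw [Matrix.mulVecLin_apply, Matrix.mulVec_smul, Matrix.mulVec_sub, hA0x, h,
        inv_smul_smul₀ (hεpos k).ne'])
  refine ⟨x1, hx0, ?_, fun j hj => hx1 j (by simpa using hj)⟩
  rw [Matrix.mulVecLin_apply] at hx1'
  simp only [hx1', sub_add_cancel]
end
end

section
/- Suppose there exists a vector α = (αⱼ)_{j∈J₀} with αⱼ > 0 for every j ∈ J₀ such that A⁰_{J₀} α = 0, where A⁰_{J₀} is the submatrix of A⁰ consisting of the columns indexed by J₀ (equivalently: there exists α ∈ ℝⁿ with αⱼ > 0 for j ∈ J₀, αⱼ = 0 for j ∉ J₀, and A⁰α = 0). Then θ₁ = θ̃₁; i.e., the limiting LP with the sign restriction x¹ⱼ ≥ 0 only for j ∉ J₀ is equivalent to the LP requiring x¹ ≥ 0 in all coordinates. -/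
/-! Dropping sign constraints gives `θ̃₁ ⊆ θ₁`. Conversely, if `x¹` is admissible for `x⁰` in `θ₁`,
then so is `x¹ + tα` for every real `t`, because `A⁰α = 0`. This translation fixes the coordinates
outside `J₀`, which are already nonnegative, and for large `t` it makes the finitely many
coordinates in `J₀` nonnegative as well, since `α > 0` there. -/

open Filter Topology Set Matrix

noncomputable section

/-- If there is `α ∈ ℝⁿ` with `αⱼ > 0` for `j ∈ J₀`, `αⱼ = 0` for
`j ∉ J₀`, and `A⁰α = 0`, then `θ₁ = θ̃₁`. -/
theorem theta1_eq_thetaTilde1_of_pos_kernel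
    {n m : ℕ} (hn : 1 ≤ n) (hm : 1 ≤ m)
    (A0 A1 : Matrix (Fin m) (Fin n) ℝ) (b0 b1 : Fin m → ℝ)
    (hα : ∃ α : Fin n → ℝ, (∀ j ∈ J0 n m A0 A1 b0 b1, 0 < α j) ∧
      (∀ j ∉ J0 n m A0 A1 b0 b1, α j = 0) ∧ A0 *ᵥ α = 0) :
    theta1 n m A0 A1 b0 b1 = thetaTilde1 n m A0 A1 b0 b1 := by
  obtain ⟨α, hpos, hzero, hker⟩ := hα
  have hnonneg : ∀ j, 0 ≤ α j := fun j => by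
    by_cases hj : j ∈ J0 n m A0 A1 b0 b1
    · exact (hpos j hj).le
    · exact (hzero j hj).ge
  ext x0
  constructor
  · rintro ⟨x1, hx0, heq, hx1⟩
    -- Each ratio `|x1 j| / α j` with `α j > 0` is at most `t`, so `t • α` dominates `|x1|` on
    -- `J₀`; the terms with `α j = 0` contribute `0` to the sum.
    set t : ℝ := ∑ j, |x1 j| / α j with ht
    refine ⟨hx0, x1 + t • α, ?_, fun j => ?_⟩
    · rw [mulVec_add, mulVec_smul, hker, smul_zero, add_zero]
      exact heq
    · by_cases hj : j ∈ J0 n m A0 A1 b0 b1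
      · have hle : |x1 j| / α j ≤ t :=
          Finset.single_le_sum (f := fun j => |x1 j| / α j)
            (fun i _ => div_nonneg (abs_nonneg _) (hnonneg i)) (Finset.mem_univ j)
        have hdom : |x1 j| ≤ t * α j := (div_le_iff₀ (hpos j hj)).1 hle
        have := neg_abs_le (x1 j)
        simp only [Pi.add_apply, Pi.smul_apply, smul_eq_mul]
        linarith
      · simpa [hzero j hj] using hx1 j hj
  · rintro ⟨hx0, x1, heq, hx1⟩
    exact ⟨x1, hx0, heq, fun j _ => hx1 j⟩
end
end

section
/- If b⁰ = 0, then θ₁ = θ̃₁; i.e., when the unperturbed right-hand side vanishes, the limiting LP with the sign restriction x¹ⱼ ≥ 0 only for j ∉ J₀ is equivalent to the LP requiring x¹ ≥ 0 in all coordinates. -/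
/-! When `b⁰ = 0`, `θ(0)` is the convex cone `{x ≥ 0 : A⁰x = 0}`. Given `(x⁰, x¹) ∈ Θ₁`, each
coordinate `j` with `x¹ⱼ < 0` lies in `J₀`, so some ray of the cone has positive `j`-th coordinate.
Adding large enough multiples of these rays to `x¹` makes every coordinate nonnegative and leaves
`A⁰x¹` unchanged. -/

open Filter Topology Set Matrix

noncomputable section

/-- If `b⁰ = 0`, then `θ₁ = θ̃₁`. -/
theorem theta1_eq_thetaTilde1_of_b0_eq_zero
    {n m : ℕ} (hn : 1 ≤ n) (hm : 1 ≤ m)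
    (A0 A1 : Matrix (Fin m) (Fin n) ℝ) (b0 b1 : Fin m → ℝ)
    (hb0 : b0 = 0) :
    theta1 n m A0 A1 b0 b1 = thetaTilde1 n m A0 A1 b0 b1 := by
  subst hb0
  ext x0
  constructor
  · rintro ⟨x1, hx0, heq, hpos⟩
    have key : ∀ j, ∃ z : Fin n → ℝ, A0 *ᵥ z = 0 ∧ (∀ i, 0 ≤ z i) ∧ 0 ≤ x1 j + z j := by
      intro j
      by_cases hj : j ∈ J0 n m A0 A1 0 b1
      · obtain ⟨y, ⟨hy, hy0⟩, hyj⟩ := hj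
        refine ⟨(|x1 j| / y j) • y, ?_, ?_, ?_⟩
        · rw [Matrix.mulVec_smul, show A0 *ᵥ y = 0 by simpa using hy, smul_zero]
        · intro i
          exact mul_nonneg (div_nonneg (abs_nonneg _) hyj.le) (hy0 i)
        · have h : |x1 j| / y j * y j = |x1 j| := div_mul_cancel₀ _ hyj.ne'
          rw [Pi.smul_apply, smul_eq_mul, h]
          linarith [neg_abs_le (x1 j)]
      · exact ⟨0, by simp, by simp, by simpa using hpos j hj⟩
    choose z hz hz0 hzj using key
    refine ⟨hx0, x1 + ∑ j, z j, ?_, ?_⟩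
    · rw [Matrix.mulVec_add, Matrix.mulVec_sum, Finset.sum_eq_zero fun j _ => hz j, add_zero]
      exact heq
    · intro j
      have h : z j j ≤ ∑ k, z k j :=
        Finset.single_le_sum (f := fun k => z k j) (fun k _ => hz0 k j) (Finset.mem_univ j)
      rw [Pi.add_apply, Finset.sum_apply]
      linarith [hzj j]
  · rintro ⟨hx0, x1, heq, hpos⟩
    exact ⟨x1, hx0, heq, fun j _ => hpos j⟩
end
end

section
/- Let A⁰, A¹ ∈ ℝ^{m×n}, b⁰, b¹ ∈ ℝᵐ, γ > 0, and let x⁽ˡ⁾ ∈ ℝⁿ (l = 0,1,2,…) be such that the series x(ε) := Σ_{l=0}^∞ εˡ x⁽ˡ⁾ converges for every ε ∈ (0,γ), and suppose that for every ε ∈ (0,γ): x(ε) ≥ 0 componentwise and (A⁰ + εA¹)x(ε) = b⁰ + εb¹. Then: (i) x⁽⁰⁾ ≥ 0 and A⁰x⁽⁰⁾ = b⁰, i.e., x⁽⁰⁾ ∈ θ(0); (ii) A⁰x⁽¹⁾ + A¹x⁽⁰⁾ = b¹; and (iii) x⁽¹⁾ⱼ ≥ 0 for every index j with x⁽⁰⁾ⱼ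 = 0. In particular (x⁽⁰⁾, x⁽¹⁾) ∈ Θ₁ and x⁽⁰⁾ ∈ θ₁. -/
/-!
A convergent power series tends to its constant coefficient at `0⁺`: in finite dimension
convergence at `γ / 2` is absolute, which dominates the terms on `(0, γ / 2)`. Applied to
`x(ε)` and to the shifted series, this gives `x(ε) → x⁽⁰⁾` and `ε⁻¹ (x(ε) - x⁽⁰⁾) → x⁽¹⁾`.
The two equations arise as limits of `A⁰ x(ε) + ε A¹ x(ε) = b⁰ + ε b¹` and of its difference
quotient `A⁰ (ε⁻¹ (x(ε) - x⁽⁰⁾)) + A¹ x(ε) = b¹`; the sign conditions are limits of `x(ε) ≥ 0`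
and, at indices with `x⁽⁰⁾ⱼ = 0`, of `ε⁻¹ x(ε)ⱼ ≥ 0`. Finally, an index outside `J₀` satisfies
`x⁽⁰⁾ⱼ = 0` because `x⁽⁰⁾ ∈ θ(0)`.
-/

open Filter Topology Set Matrix

noncomputable section

/-- Only one-sided convergence, on `(0, γ)`, is needed for the series to tend to its constant
coefficient. -/
lemma tendsto_of_hasSum_pow_smul {n : ℕ} {γ : ℝ} (hγ : 0 < γ)
    {s : ℝ → (Fin n → ℝ)} {a : ℕ → (Fin n → ℝ)}
    (h : ∀ ε ∈ Ioo (0 : ℝ) γ, HasSum (fun l : ℕ => ε ^ l • a l) (s ε)) :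
    Tendsto s (𝓝[>] 0) (𝓝 (a 0)) := by
  have hb : Summable (fun l : ℕ => ‖(γ / 2) ^ l • a l‖) :=
    (h (γ / 2) ⟨by linarith, by linarith⟩).summable.norm
  have hlim : Tendsto (fun ε : ℝ => ∑' l : ℕ, ε ^ l • a l) (𝓝[>] 0)
      (𝓝 (∑' l : ℕ, (0 : ℝ) ^ l • a l)) := by
    refine tendsto_tsum_of_dominated_convergence hb (fun l => ?_) ?_
    · have hc : Continuous (fun ε : ℝ => ε ^ l • a l) := by fun_prop
      exact (hc.tendsto 0).mono_left nhdsWithin_le_nhds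
    · filter_upwards [Ioo_mem_nhdsGT (half_pos hγ)] with ε hε l
      rw [norm_smul, norm_smul, norm_pow, norm_pow, Real.norm_of_nonneg hε.1.le,
        Real.norm_of_nonneg (half_pos hγ).le]
      have := hε.1.le
      have := hε.2.le
      gcongr
  have h0 : ∑' l : ℕ, (0 : ℝ) ^ l • a l = a 0 := by
    rw [tsum_eq_single 0 (fun l hl => by simp [hl])]
    simp
  rw [h0] at hlim
  refine hlim.congr' ?_
  filter_upwards [Ioo_mem_nhdsGT hγ] with ε hε using (h ε hε).tsum_eq

/-- The difference quotient of a power series is the sum of the shifted series. -/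
lemma hasSum_pow_smul_shift {n : ℕ} {ε : ℝ} (hε : ε ≠ 0) {s : Fin n → ℝ}
    {a : ℕ → (Fin n → ℝ)} (h : HasSum (fun l : ℕ => ε ^ l • a l) s) :
    HasSum (fun l : ℕ => ε ^ l • a (l + 1)) (ε⁻¹ • (s - a 0)) := by
  have h1 : HasSum (fun l : ℕ => ε ^ (l + 1) • a (l + 1)) (s - a 0) := by
    rw [hasSum_nat_add_iff (f := fun l : ℕ => ε ^ l • a l) 1]
    simpa using h
  convert h1.const_smul ε⁻¹ using 2 with l
  rw [smul_smul, pow_succ', inv_mul_cancel_left₀ hε]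

/-- If `x(ε) = Σ_{l≥0} εˡ x⁽ˡ⁾` converges for every `ε ∈ (0,γ)` and
`x(ε)` is feasible for the perturbed LP for every `ε ∈ (0,γ)`, then
(i) `x⁽⁰⁾ ≥ 0` and `A⁰x⁽⁰⁾ = b⁰` (i.e. `x⁽⁰⁾ ∈ θ(0)`);
(ii) `A⁰x⁽¹⁾ + A¹x⁽⁰⁾ = b¹`;
(iii) `x⁽¹⁾ⱼ ≥ 0` whenever `x⁽⁰⁾ⱼ = 0`.
In particular `(x⁽⁰⁾, x⁽¹⁾) ∈ Θ₁` and `x⁽⁰⁾ ∈ θ₁`. -/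
theorem power_series_feasible_implies_Theta1
    {n m : ℕ} (hn : 1 ≤ n) (hm : 1 ≤ m)
    (A0 A1 : Matrix (Fin m) (Fin n) ℝ) (b0 b1 : Fin m → ℝ)
    (γ : ℝ) (hγ : 0 < γ)
    (x : ℝ → (Fin n → ℝ)) (xs : ℕ → (Fin n → ℝ))
    (hsum : ∀ ε ∈ Ioo (0 : ℝ) γ, HasSum (fun l : ℕ => ε ^ l • xs l) (x ε))
    (hfeas : ∀ ε ∈ Ioo (0 : ℝ) γ, x ε ∈ theta n m A0 A1 b0 b1 ε) :
    ((∀ j, 0 ≤ xs 0 j) ∧ A0 *ᵥ xs 0 = b0) ∧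
    (A0 *ᵥ xs 1 + A1 *ᵥ xs 0 = b1) ∧
    (∀ j, xs 0 j = 0 → 0 ≤ xs 1 j) ∧
    (xs 0, xs 1) ∈ Theta1 n m A0 A1 b0 b1 ∧
    xs 0 ∈ theta1 n m A0 A1 b0 b1 := by
  have hx : Tendsto x (𝓝[>] 0) (𝓝 (xs 0)) := tendsto_of_hasSum_pow_smul hγ hsum
  have hy : Tendsto (fun ε : ℝ => ε⁻¹ • (x ε - xs 0)) (𝓝[>] 0) (𝓝 (xs 1)) :=
    tendsto_of_hasSum_pow_smul (a := fun l => xs (l + 1)) hγ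
      fun ε hε => hasSum_pow_smul_shift hε.1.ne' (hsum ε hε)
  have hev : ∀ᶠ ε in 𝓝[>] (0 : ℝ), ε ∈ Ioo (0 : ℝ) γ := Ioo_mem_nhdsGT hγ
  have hid : Tendsto (fun ε : ℝ => ε) (𝓝[>] 0) (𝓝 0) := nhdsWithin_le_nhds
  have hmul {k : ℕ} (A : Matrix (Fin m) (Fin k) ℝ) {f : ℝ → (Fin k → ℝ)} {v : Fin k → ℝ}
      (hf : Tendsto f (𝓝[>] 0) (𝓝 v)) :
      Tendsto (fun ε => A *ᵥ f ε) (𝓝[>] 0) (𝓝 (A *ᵥ v)) := by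
    have hc : Continuous (fun v : Fin k → ℝ => A *ᵥ v) := by fun_prop
    exact (hc.tendsto v).comp hf
  have heq : ∀ ε ∈ Ioo (0 : ℝ) γ, A0 *ᵥ x ε + ε • (A1 *ᵥ x ε) = b0 + ε • b1 := by
    intro ε hε
    rw [← (hfeas ε hε).1, add_mulVec, smul_mulVec]
  have hpos : ∀ j, 0 ≤ xs 0 j := fun j =>
    ge_of_tendsto (tendsto_pi_nhds.1 hx j) (hev.mono fun ε hε => (hfeas ε hε).2 j)
  have hA0 : A0 *ᵥ xs 0 = b0 := by
    have hl := (hmul A0 hx).add (hid.smul (hmul A1 hx))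
    have hr : Tendsto (fun ε : ℝ => b0 + ε • b1) (𝓝[>] 0) (𝓝 (b0 + (0 : ℝ) • b1)) :=
      tendsto_const_nhds.add (hid.smul tendsto_const_nhds)
    simpa using tendsto_nhds_unique (hl.congr' (hev.mono heq)) hr
  have hA1 : A0 *ᵥ xs 1 + A1 *ᵥ xs 0 = b1 := by
    refine tendsto_nhds_unique (((hmul A0 hy).add (hmul A1 hx)).congr' ?_)
      (tendsto_const_nhds (x := b1))
    filter_upwards [hev] with ε hε
    have hne : ε ≠ 0 := hε.1.ne'
    have h1 : A0 *ᵥ x ε - b0 = ε • (b1 - A1 *ᵥ x ε) := by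
      rw [smul_sub, sub_eq_sub_iff_add_eq_add, heq ε hε, add_comm]
    rw [mulVec_smul, mulVec_sub, hA0, h1, inv_smul_smul₀ hne, sub_add_cancel]
  have hxs1 : ∀ j, xs 0 j = 0 → 0 ≤ xs 1 j := by
    intro j hj
    refine ge_of_tendsto (tendsto_pi_nhds.1 hy j) (hev.mono fun ε hε => ?_)
    simpa [hj] using mul_nonneg (inv_nonneg.2 hε.1.le) ((hfeas ε hε).2 j)
  have hmem : xs 0 ∈ theta n m A0 A1 b0 b1 0 := ⟨by simpa using hA0, hpos⟩
  have hTheta : (xs 0, xs 1) ∈ Theta1 n m A0 A1 b0 b1 :=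
    ⟨hmem, hA1, fun j hj => hxs1 j <|
      le_antisymm (not_lt.1 fun hlt => hj ⟨xs 0, hmem, hlt⟩) (hpos j)⟩
  exact ⟨⟨hpos, hA0⟩, hA1, hxs1, hTheta, xs 1, hTheta⟩
end
end

section
/- The optimal value of the discounted-LP converges, as ε ↓ 0, to the optimal value of the limiting (long-run average) LP: lim_{ε↓0} F*(ε) = F₁*, where F*(ε) := inf{Σⱼ γⱼ vⱼ : (v,σ) feasible for the discounted-LP with parameter ε} and F₁* := inf{Σⱼ γⱼ v⁰ⱼ : (v⁰,σ⁰,v¹,σ¹) feasible for the limiting LP}. -/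
/-!
Write `D w (i,a) = wᵢ − Σⱼ p_{iaj} wⱼ`, so that `D` kills constants. Eliminating the slacks, the
discounted-LP asks for `v ≥ 0` with `ε v + D v ≥ ε r`, and the limiting LP for `v⁰, v¹ ≥ 0` with
`D v⁰ ≥ 0` and `v⁰ + D v¹ ≥ r`.

*Upper bound.* If `(v⁰, v¹)` is feasible for the limiting LP, then `v⁰ + ε v¹` is feasible for the
discounted-LP, hence `F*(ε) ≤ Σ γ v⁰ + ε Σ γ v¹` (`dVal_le`).

*Lower bound.* Suppose `F*(εₙ)` stays below some `a < F₁*` along `εₙ ↓ 0`, and take feasible `vₙ`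
of value below some `a' < F₁*`. They are bounded since `γ > 0`, so a subsequence converges to some
`v⁰ ≥ 0` with `D v⁰ ≥ 0`. At a pair `k` which is tight, i.e. `D v⁰ k = 0`, the vector
`uₙ = (vₙ − v⁰)/εₙ` satisfies `D uₙ k ≥ r − vₙ`. The `uₙ` may be unbounded, but the set of
right-hand sides `b` for which the system `D u ≥ b` is solvable is closed
(`exists_solution_of_tendsto`), so some `u` satisfies `D u ≥ r − v⁰` at all tight pairs. Adding
to `u` a large multiple of `v⁰` repairs the finitely many non-tight pairs, and adding a constant
makes it nonnegative, so `v⁰` extends to a feasible point of the limiting LP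
(`exists_avFeas_of_tendsto`), whose value is at most `a' < F₁*`: a contradiction.
-/

open Filter Topology Set

noncomputable section

/-- Feasible set of the discounted-LP with parameter `ε`:
`Σⱼ((1+ε)δ_{ij} − p_{iaj})vⱼ − σ_{ia} = ε r_{ia}` for all `(i,a)`, `v ≥ 0`, `σ ≥ 0`. -/
def dFeas (N : ℕ) (Act : Fin N → Type) [∀ i, Fintype (Act i)]
    (p : ∀ i : Fin N, Act i → Fin N → ℝ) (r : ∀ i : Fin N, Act i → ℝ) (ε : ℝ) :
    Set ((Fin N → ℝ) × ((Σ i : Fin N, Act i) → ℝ)) :=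
  {vs | (∀ (i : Fin N) (a : Act i),
          (∑ j, ((1 + ε) * (if i = j then (1 : ℝ) else 0) - p i a j) * vs.1 j)
            - vs.2 ⟨i, a⟩ = ε * r i a)
    ∧ (∀ j, 0 ≤ vs.1 j) ∧ (∀ k, 0 ≤ vs.2 k)}

/-- Optimal value `F*(ε)` of the discounted-LP (a minimization problem). -/
def dVal (N : ℕ) (Act : Fin N → Type) [∀ i, Fintype (Act i)]
    (p : ∀ i : Fin N, Act i → Fin N → ℝ) (r : ∀ i : Fin N, Act i → ℝ)
    (γw : Fin N → ℝ) (ε : ℝ) : ℝ :=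
  sInf ((fun vs => ∑ j, γw j * vs.1 j) '' dFeas N Act p r ε)

/-- Feasible set of the limiting (long-run average) LP:
`Σⱼ(δ_{ij} − p_{iaj})v⁰ⱼ − σ⁰_{ia} = 0` and
`v⁰ᵢ + Σⱼ(δ_{ij} − p_{iaj})v¹ⱼ − σ¹_{ia} = r_{ia}` for all `(i,a)`, all variables `≥ 0`. -/
def avFeas (N : ℕ) (Act : Fin N → Type) [∀ i, Fintype (Act i)]
    (p : ∀ i : Fin N, Act i → Fin N → ℝ) (r : ∀ i : Fin N, Act i → ℝ) :
    Set ((Fin N → ℝ) × ((Σ i : Fin N, Act i) → ℝ) ×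
         (Fin N → ℝ) × ((Σ i : Fin N, Act i) → ℝ)) :=
  {q | (∀ (i : Fin N) (a : Act i),
          (∑ j, ((if i = j then (1 : ℝ) else 0) - p i a j) * q.1 j) - q.2.1 ⟨i, a⟩ = 0)
    ∧ (∀ (i : Fin N) (a : Act i),
          q.1 i + (∑ j, ((if i = j then (1 : ℝ) else 0) - p i a j) * q.2.2.1 j)
            - q.2.2.2 ⟨i, a⟩ = r i a)
    ∧ (∀ j, 0 ≤ q.1 j) ∧ (∀ k, 0 ≤ q.2.1 k) ∧ (∀ j, 0 ≤ q.2.2.1 j) ∧ (∀ k, 0 ≤ q.2.2.2 k)}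

/-- Optimal value `F₁*` of the limiting (long-run average) LP. -/
def avVal (N : ℕ) (Act : Fin N → Type) [∀ i, Fintype (Act i)]
    (p : ∀ i : Fin N, Act i → Fin N → ℝ) (r : ∀ i : Fin N, Act i → ℝ)
    (γw : Fin N → ℝ) : ℝ :=
  sInf ((fun q => ∑ j, γw j * q.1 j) '' avFeas N Act p r)

/-! ### Closedness of solvability for linear inequalities -/

/-- The right-hand sides for which a finite system of linear inequalities is solvable form a
closed set. Solutions `u n` of minimal norm have a bounded subsequence: otherwise a limit
direction `d` of `u n / ‖u n‖` is a recession direction, and `u n - d` would be a shorter solution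
for large `n`. -/
lemma exists_solution_of_tendsto {κ E : Type*} [Finite κ] [NormedAddCommGroup E]
    [InnerProductSpace ℝ E] [FiniteDimensional ℝ E] (B : κ → E →L[ℝ] ℝ)
    (b : ℕ → κ → ℝ) (b0 : κ → ℝ) (hb : ∀ k, Tendsto (fun n => b n k) atTop (𝓝 (b0 k)))
    (h : ∀ n, ∃ u, ∀ k, b n k ≤ B k u) : ∃ u, ∀ k, b0 k ≤ B k u := by
  have hmin : ∀ n, ∃ u, (∀ k, b n k ≤ B k u) ∧ ∀ w, (∀ k, b n k ≤ B k w) → ‖u‖ ≤ ‖w‖ := by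
    intro n
    have hcl : IsClosed {u : E | ∀ k, b n k ≤ B k u} := by
      simp only [ofPred_forall]
      exact isClosed_iInter fun k => isClosed_le continuous_const (B k).continuous
    obtain ⟨u, hu, hd⟩ := hcl.exists_infDist_eq_dist (h n) 0
    refine ⟨u, hu, fun w hw => ?_⟩
    have := Metric.infDist_le_dist_of_mem (x := (0 : E))
      (show w ∈ {u : E | ∀ k, b n k ≤ B k u} from hw)
    rw [hd] at this
    simpa using this
  choose u hu hum using hmin
  by_cases hbd : ∃ R, ∃ᶠ n in atTop, ‖u n‖ ≤ R
  · obtain ⟨R, hR⟩ := hbd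
    obtain ⟨x, -, φ, hφ, hx⟩ := tendsto_subseq_of_frequently_bounded
      (Metric.isBounded_closedBall (x := (0 : E)) (r := R)) (x := u)
      (hR.mono fun n hn => by simpa using hn)
    refine ⟨x, fun k => ?_⟩
    exact le_of_tendsto_of_tendsto' ((hb k).comp hφ.tendsto_atTop)
      (((B k).continuous.tendsto x).comp hx) fun n => hu (φ n) k
  · exfalso
    have hinf : Tendsto (fun n => ‖u n‖) atTop atTop := by
      rw [tendsto_atTop]
      intro R
      by_contra hc
      exact hbd ⟨R, (not_eventually.1 hc).mono fun n hn => (not_le.1 hn).le⟩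
    obtain ⟨d, -, φ, hφ, hd⟩ := (isCompact_closedBall (0 : E) 1).tendsto_subseq
      (x := fun n => ‖u n‖⁻¹ • u n) (fun n => by
        simp only [mem_closedBall_zero_iff, norm_smul, norm_inv, norm_norm]
        exact inv_mul_le_one)
    have hinf' : Tendsto (fun n => ‖u (φ n)‖) atTop atTop := hinf.comp hφ.tendsto_atTop
    have hpos : ∀ᶠ n in atTop, 0 < ‖u (φ n)‖ := hinf'.eventually_gt_atTop 0
    have hb' : ∀ k, Tendsto (fun n => b (φ n) k) atTop (𝓝 (b0 k)) := fun k =>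
      (hb k).comp hφ.tendsto_atTop
    have hBd : ∀ k, Tendsto (fun n => ‖u (φ n)‖⁻¹ * B k (u (φ n))) atTop (𝓝 (B k d)) := by
      intro k
      have := ((B k).continuous.tendsto d).comp hd
      refine this.congr fun n => ?_
      simp
    have hrec : ∀ k, 0 ≤ B k d := by
      intro k
      have h0 : Tendsto (fun n => ‖u (φ n)‖⁻¹ * b (φ n) k) atTop (𝓝 (0 * b0 k)) :=
        (tendsto_inv_atTop_zero.comp hinf').mul (hb' k)
      rw [zero_mul] at h0
      exact le_of_tendsto_of_tendsto' h0 (hBd k) fun n =>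
        mul_le_mul_of_nonneg_left (hu _ k) (by positivity)
    -- Subtracting `d` changes nothing in rows with `B k d = 0`; in the others the slack tends to
    -- infinity.
    have hsol : ∀ᶠ n in atTop, ∀ k, b (φ n) k ≤ B k (u (φ n) - d) := by
      rw [eventually_all]
      intro k
      rcases (hrec k).eq_or_lt with h0 | h0
      · refine Eventually.of_forall fun n => ?_
        rw [map_sub, ← h0, sub_zero]
        exact hu _ k
      · have ht : Tendsto (fun n => B k (u (φ n))) atTop atTop := by
          refine (hinf'.atTop_mul_pos h0 (hBd k)).congr' ?_
          filter_upwards [hpos] with n hn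
          field_simp
        filter_upwards [ht.eventually_ge_atTop (b0 k + 1 + B k d),
          (hb' k).eventually_lt_const (show b0 k < b0 k + 1 by linarith)] with n h1 h2
        rw [map_sub]
        linarith
    have hdn : ‖d‖ = 1 := by
      refine tendsto_nhds_unique hd.norm (tendsto_const_nhds.congr' ?_)
      filter_upwards [hpos] with n hn
      simp [norm_smul, hn.ne']
    -- `‖u - d‖² = ‖u‖² - 2⟪u, d⟫ + 1`, so `u - d` is shorter than `u` once `⟪u, d⟫` is large.
    have hin : Tendsto (fun n => inner ℝ (u (φ n)) d) atTop atTop := by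
      have h1 : Tendsto (fun n => ‖u (φ n)‖⁻¹ * inner ℝ (u (φ n)) d) atTop (𝓝 1) := by
        have h2 : Tendsto (fun n => inner ℝ (‖u (φ n)‖⁻¹ • u (φ n)) d) atTop (𝓝 (inner ℝ d d)) :=
          hd.inner tendsto_const_nhds
        rw [real_inner_self_eq_norm_sq, hdn, one_pow] at h2
        refine h2.congr fun n => ?_
        rw [real_inner_smul_left]
      refine (hinf'.atTop_mul_pos one_pos h1).congr' ?_
      filter_upwards [hpos] with n hn
      field_simp
    obtain ⟨n, h1, h2⟩ := (hsol.and (hin.eventually_ge_atTop 1)).exists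
    have h3 := hum _ _ h1
    have h4 := norm_sub_sq_real (u (φ n)) d
    rw [hdn] at h4
    have h5 : ‖u (φ n)‖ ^ 2 ≤ ‖u (φ n) - d‖ ^ 2 := by gcongr
    linarith

/-! ### The two linear programs -/

section MDP

variable {N : ℕ} {Act : Fin N → Type} [∀ i, Fintype (Act i)]
  {p : ∀ i : Fin N, Act i → Fin N → ℝ} {r : ∀ i : Fin N, Act i → ℝ}

lemma sum_delta_sub (c : ℝ) (i : Fin N) (f v : Fin N → ℝ) :
    ∑ j, (c * (if i = j then (1 : ℝ) else 0) - f j) * v j = c * v i - ∑ j, f j * v j := by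
  simp [sub_mul, Finset.sum_sub_distrib]

lemma sum_delta_sub' (i : Fin N) (f v : Fin N → ℝ) :
    ∑ j, ((if i = j then (1 : ℝ) else 0) - f j) * v j = v i - ∑ j, f j * v j := by
  simpa using sum_delta_sub 1 i f v

/-- Feasibility for the discounted-LP with the slack variables eliminated. -/
lemma exists_mem_dFeas {ε : ℝ} {v : Fin N → ℝ} (h0 : ∀ j, 0 ≤ v j)
    (h : ∀ i a, ε * r i a ≤ (1 + ε) * v i - ∑ j, p i a j * v j) :
    ∃ s, (v, s) ∈ dFeas N Act p r ε := by
  refine ⟨fun k => (1 + ε) * v k.1 - ∑ j, p k.1 k.2 j * v j - ε * r k.1 k.2, ?_, h0, ?_⟩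
  · intro i a
    simp only [sum_delta_sub]
    ring
  · intro k
    have := h k.1 k.2
    simp only
    linarith

lemma le_of_mem_dFeas {ε : ℝ} {vs} (h : vs ∈ dFeas N Act p r ε) (i : Fin N) (a : Act i) :
    ε * r i a ≤ (1 + ε) * vs.1 i - ∑ j, p i a j * vs.1 j := by
  have h1 := h.1 i a
  have h2 := h.2.2 ⟨i, a⟩
  rw [sum_delta_sub] at h1
  linarith

/-- Feasibility for the limiting LP with the slack variables eliminated. -/
lemma exists_mem_avFeas {v w : Fin N → ℝ} (hv : ∀ j, 0 ≤ v j) (hw : ∀ j, 0 ≤ w j)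
    (h0 : ∀ i a, 0 ≤ v i - ∑ j, p i a j * v j)
    (h1 : ∀ i a, r i a ≤ v i + (w i - ∑ j, p i a j * w j)) :
    ∃ q ∈ avFeas N Act p r, q.1 = v := by
  refine ⟨(v, fun k => v k.1 - ∑ j, p k.1 k.2 j * v j, w,
    fun k => v k.1 + (w k.1 - ∑ j, p k.1 k.2 j * w j) - r k.1 k.2),
    ⟨?_, ?_, hv, ?_, hw, ?_⟩, rfl⟩
  · intro i a
    simp only [sum_delta_sub']
    ring
  · intro i a
    simp only [sum_delta_sub']
    ring
  · intro k
    exact h0 k.1 k.2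
  · intro k
    exact sub_nonneg.2 (h1 k.1 k.2)

lemma bddBelow_dFeas {γw : Fin N → ℝ} (hγw : ∀ j, 0 < γw j) (ε : ℝ) :
    BddBelow ((fun vs => ∑ j, γw j * vs.1 j) '' dFeas N Act p r ε) := by
  refine ⟨0, ?_⟩
  rintro _ ⟨vs, hvs, rfl⟩
  exact Finset.sum_nonneg fun j _ => mul_nonneg (hγw j).le (hvs.2.1 j)

lemma bddBelow_avFeas {γw : Fin N → ℝ} (hγw : ∀ j, 0 < γw j) :
    BddBelow ((fun q => ∑ j, γw j * q.1 j) '' avFeas N Act p r) := by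
  refine ⟨0, ?_⟩
  rintro _ ⟨q, hq, rfl⟩
  exact Finset.sum_nonneg fun j _ => mul_nonneg (hγw j).le (hq.2.2.1 j)

/-- A constant `v⁰` bounding all rewards, with `v¹ = 0`, is feasible for the limiting LP. -/
lemma avFeas_nonempty (hp1 : ∀ (i : Fin N) (a : Act i), ∑ j, p i a j = 1) :
    (avFeas N Act p r).Nonempty := by
  obtain ⟨M, hM⟩ := (Set.finite_range fun k : Σ i, Act i => r k.1 k.2).bddAbove
  obtain ⟨q, hq, -⟩ := exists_mem_avFeas (p := p) (r := r) (v := fun _ => max M 0) (w := fun _ => 0)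
    (fun _ => le_max_right _ _) (fun _ => le_rfl)
    (fun i a => by simp [← Finset.sum_mul, hp1])
    (fun i a => by
      have : r i a ≤ M := hM ⟨⟨i, a⟩, rfl⟩
      simp [this])
  exact ⟨q, hq⟩

/-- A feasible point of the limiting LP yields the feasible point `v⁰ + ε v¹` of the
discounted-LP. -/
lemma exists_mem_dFeas_of_avFeas {q} (hq : q ∈ avFeas N Act p r) {ε : ℝ} (hε : 0 < ε) :
    ∃ s, ((fun j => q.1 j + ε * q.2.2.1 j), s) ∈ dFeas N Act p r ε := by
  obtain ⟨h0, h1, hv, hs0, hw, hs1⟩ := hq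
  refine exists_mem_dFeas (fun j => add_nonneg (hv j) (mul_nonneg hε.le (hw j))) fun i a => ?_
  have e0 := h0 i a
  have e1 := h1 i a
  rw [sum_delta_sub'] at e0 e1
  have g0 := hs0 ⟨i, a⟩
  have g1 := mul_nonneg hε.le (hs1 ⟨i, a⟩)
  have g2 := mul_nonneg (mul_nonneg hε.le hε.le) (hw i)
  have e2 : ∑ j, p i a j * (q.1 j + ε * q.2.2.1 j)
      = ∑ j, p i a j * q.1 j + ε * ∑ j, p i a j * q.2.2.1 j := by
    rw [Finset.mul_sum, ← Finset.sum_add_distrib]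
    exact Finset.sum_congr rfl fun j _ => by ring
  rw [e2, ← e1]
  nlinarith

lemma dVal_le {γw : Fin N → ℝ} (hγw : ∀ j, 0 < γw j) {q} (hq : q ∈ avFeas N Act p r)
    {ε : ℝ} (hε : 0 < ε) :
    dVal N Act p r γw ε ≤ ∑ j, γw j * q.1 j + ε * ∑ j, γw j * q.2.2.1 j := by
  obtain ⟨s, hs⟩ := exists_mem_dFeas_of_avFeas hq hε
  refine csInf_le (bddBelow_dFeas hγw ε) ⟨_, hs, ?_⟩
  simp only
  rw [Finset.mul_sum, ← Finset.sum_add_distrib]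
  exact Finset.sum_congr rfl fun j _ => by ring

/-- A limit of discounted-feasible vectors along `ε ↓ 0` is the `v⁰`-part of a feasible point of
the limiting LP. -/
lemma exists_avFeas_of_tendsto (hp1 : ∀ (i : Fin N) (a : Act i), ∑ j, p i a j = 1)
    {ε : ℕ → ℝ} (hε : ∀ n, 0 < ε n) (hε0 : Tendsto ε atTop (𝓝 0))
    {v : ℕ → Fin N → ℝ} {v0 : Fin N → ℝ} (hv : Tendsto v atTop (𝓝 v0))
    (hvn : ∀ n j, 0 ≤ v n j)
    (hf : ∀ n i a, ε n * r i a ≤ (1 + ε n) * v n i - ∑ j, p i a j * v n j) :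
    ∃ q ∈ avFeas N Act p r, q.1 = v0 := by
  have hvj : ∀ j, Tendsto (fun n => v n j) atTop (𝓝 (v0 j)) := tendsto_pi_nhds.1 hv
  have hv0 : ∀ j, 0 ≤ v0 j := fun j => ge_of_tendsto' (hvj j) fun n => hvn n j
  have hD : ∀ i a, 0 ≤ v0 i - ∑ j, p i a j * v0 j := by
    intro i a
    have h1 : Tendsto (fun n => ε n * r i a) atTop (𝓝 (0 * r i a)) := hε0.mul_const _
    have h2 : Tendsto (fun n => (1 + ε n) * v n i - ∑ j, p i a j * v n j) atTop
        (𝓝 ((1 + 0) * v0 i - ∑ j, p i a j * v0 j)) :=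
      ((hε0.const_add 1).mul (hvj i)).sub
        (tendsto_finsetSum _ fun j _ => (hvj j).const_mul _)
    have := le_of_tendsto_of_tendsto' h1 h2 fun n => hf n i a
    simpa using this
  -- `κ` is the type of tight pairs, `B k` the functional `u ↦ D u k`.
  let κ := {k : Σ i, Act i // v0 k.1 - ∑ j, p k.1 k.2 j * v0 j = 0}
  let B : κ → EuclideanSpace ℝ (Fin N) →L[ℝ] ℝ := fun k =>
    EuclideanSpace.proj k.1.1 - ∑ j, p k.1.1 k.1.2 j • EuclideanSpace.proj j
  have hB : ∀ k u, B k u = u k.1.1 - ∑ j, p k.1.1 k.1.2 j * u j := by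
    intro k u
    simp [B]
  obtain ⟨u, hu⟩ := exists_solution_of_tendsto B
    (fun n k => r k.1.1 k.1.2 - v n k.1.1) (fun k => r k.1.1 k.1.2 - v0 k.1.1)
    (fun k => (hvj _).const_sub _) (by
      intro n
      refine ⟨WithLp.toLp 2 fun j => (v n j - v0 j) / ε n, ?_⟩
      rintro ⟨⟨i, a⟩, hk⟩
      rw [hB]
      simp only at hk ⊢
      have e : ∑ j, p i a j * ((v n j - v0 j) / ε n)
          = (∑ j, p i a j * v n j - ∑ j, p i a j * v0 j) / ε n := by
        rw [← Finset.sum_sub_distrib, Finset.sum_div]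
        exact Finset.sum_congr rfl fun j _ => by ring
      rw [e, ← sub_div, le_div_iff₀ (hε n)]
      have := hf n i a
      nlinarith)
  -- `M` is large enough for `u + M v0` to satisfy the constraints at the non-tight pairs, and
  -- `C` makes `u + M v0 + C` nonnegative.
  obtain ⟨M, hM⟩ := (Set.finite_range fun k : Σ i, Act i =>
    (r k.1 k.2 - v0 k.1 - (u k.1 - ∑ j, p k.1 k.2 j * u j)) /
      (v0 k.1 - ∑ j, p k.1 k.2 j * v0 j)).bddAbove
  obtain ⟨C, hC⟩ := (Set.finite_range fun j : Fin N => -(u j + M * v0 j)).bddAbove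
  refine exists_mem_avFeas (w := fun j => u j + M * v0 j + C) hv0 ?_ hD ?_
  · intro j
    have : -(u j + M * v0 j) ≤ C := hC ⟨j, rfl⟩
    linarith
  · intro i a
    have e : ∑ j, p i a j * (u j + M * v0 j + C)
        = ∑ j, p i a j * u j + M * (∑ j, p i a j * v0 j) + C := by
      have : C = ∑ j, p i a j * C := by rw [← Finset.sum_mul, hp1, one_mul]
      conv_rhs => rw [this]
      rw [Finset.mul_sum, ← Finset.sum_add_distrib, ← Finset.sum_add_distrib]
      exact Finset.sum_congr rfl fun j _ => by ring
    rw [e]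
    rcases (hD i a).eq_or_lt with h | h
    · have h1 := hu ⟨⟨i, a⟩, h.symm⟩
      rw [hB] at h1
      simp only at h1
      have h2 : M * v0 i - M * ∑ j, p i a j * v0 j = 0 := by rw [← mul_sub, ← h, mul_zero]
      linarith
    · have h1 : (r i a - v0 i - (u i - ∑ j, p i a j * u j)) / (v0 i - ∑ j, p i a j * v0 j) ≤ M :=
        hM ⟨⟨i, a⟩, rfl⟩
      rw [div_le_iff₀ h] at h1
      linarith

end MDP

/-! ### Convergence of the optimal values -/

/-- The optimal value of the discounted-LP converges, as `ε ↓ 0`, to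
the optimal value of the limiting (long-run average) LP: `lim_{ε↓0} F*(ε) = F₁*`. -/
theorem tendsto_dVal_avVal
    (N : ℕ) (hN : 1 ≤ N) (Act : Fin N → Type)
    [∀ i, Fintype (Act i)] [∀ i, Nonempty (Act i)]
    (p : ∀ i : Fin N, Act i → Fin N → ℝ) (r : ∀ i : Fin N, Act i → ℝ)
    (γw : Fin N → ℝ)
    (hp0 : ∀ (i : Fin N) (a : Act i) (j : Fin N), 0 ≤ p i a j)
    (hp1 : ∀ (i : Fin N) (a : Act i), ∑ j, p i a j = 1)
    (hγw : ∀ j, 0 < γw j) :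
    Tendsto (fun ε => dVal N Act p r γw ε) (𝓝[>] (0 : ℝ))
      (𝓝 (avVal N Act p r γw)) := by
  obtain ⟨q₀, hq₀⟩ := avFeas_nonempty (r := r) hp1
  rw [tendsto_order]
  constructor
  · intro a ha
    by_contra hc
    obtain ⟨a', haa', ha'⟩ := exists_between ha
    obtain ⟨ε, hε, hεa⟩ := exists_seq_forall_of_frequently
      ((not_eventually.1 hc).and_eventually self_mem_nhdsWithin)
    have hpos : ∀ n, 0 < ε n := fun n => (hεa n).2
    have hx : ∀ n, ∃ vs ∈ dFeas N Act p r (ε n), ∑ j, γw j * vs.1 j < a' := by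
      intro n
      obtain ⟨s, hs⟩ := exists_mem_dFeas_of_avFeas hq₀ (hpos n)
      have hlt : dVal N Act p r γw (ε n) < a' := (not_lt.1 (hεa n).1).trans_lt haa'
      obtain ⟨_, ⟨vs, hvs, rfl⟩, h⟩ := exists_lt_of_csInf_lt
        (Set.Nonempty.image _ ⟨_, hs⟩) hlt
      exact ⟨vs, hvs, h⟩
    choose vs hvs hval using hx
    have hmem : ∀ n, (vs n).1 ∈ Set.Icc (0 : Fin N → ℝ) (fun j => a' / γw j) := by
      intro n
      refine ⟨fun j => (hvs n).2.1 j, fun j => ?_⟩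
      rw [le_div_iff₀ (hγw j), mul_comm]
      exact (Finset.single_le_sum (f := fun j => γw j * (vs n).1 j)
        (fun j _ => mul_nonneg (hγw j).le ((hvs n).2.1 j)) (Finset.mem_univ j)).trans (hval n).le
    obtain ⟨v0, -, φ, hφ, hlim⟩ := isCompact_Icc.tendsto_subseq hmem
    obtain ⟨q, hq, rfl⟩ := exists_avFeas_of_tendsto (r := r) hp1 (fun n => hpos (φ n))
      ((tendsto_nhds_of_tendsto_nhdsWithin hε).comp hφ.tendsto_atTop) hlim
      (fun n => (hvs (φ n)).2.1) (fun n => le_of_mem_dFeas (hvs (φ n)))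
    have h1 : ∑ j, γw j * q.1 j ≤ a' :=
      le_of_tendsto' (tendsto_finsetSum _ fun j _ => (tendsto_pi_nhds.1 hlim j).const_mul (γw j))
        fun n => (hval (φ n)).le
    have h2 : avVal N Act p r γw ≤ ∑ j, γw j * q.1 j :=
      csInf_le (bddBelow_avFeas hγw) ⟨q, hq, rfl⟩
    linarith
  · intro a ha
    obtain ⟨_, ⟨q, hq, rfl⟩, h⟩ := exists_lt_of_csInf_lt
      (Set.Nonempty.image _ ⟨q₀, hq₀⟩) ha
    have ht : Tendsto (fun ε : ℝ => ∑ j, γw j * q.1 j + ε * ∑ j, γw j * q.2.2.1 j) (𝓝[>] 0)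
        (𝓝 (∑ j, γw j * q.1 j)) := by
      have hc : Continuous fun ε : ℝ => ∑ j, γw j * q.1 j + ε * ∑ j, γw j * q.2.2.1 j := by
        fun_prop
      simpa using (hc.tendsto 0).mono_left nhdsWithin_le_nhds
    filter_upwards [ht.eventually_lt_const h, self_mem_nhdsWithin] with ε h1 h2
    exact (dVal_le hγw hq h2).trans_lt h1
end
end

section
/- Assumption (H₀*) holds for the family of discounted-LPs: there exist γ₀ > 0 and a bounded set B ⊂ ℝᴺ × ℝᴷ such that for every ε ∈ (0,γ₀], every optimal solution (v,σ) of the discounted-LP with parameter ε belongs to B. -/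
/-!
Let `R` be the sum of all `|r i a|`. Since the rows of `p` sum to one, the constant vector `v = R`
with slack `σ = ε (R - r)` is feasible for every `ε > 0`, so the optimal value is at most
`C = (∑ j, γw j) R`, independently of `ε`. As `v ≥ 0` and `γw > 0`, an optimal `v` satisfies
`v j ≤ C / γw j`. The equality constraint then gives, for `ε ≤ 1`,
`σ (i, a) ≤ (1 + ε) v i + ε |r i a| ≤ 2 C / γw i + |r i a|`,
so all optimal solutions with `ε ∈ (0, 1]` lie in one order interval.
-/

open Filter Topology Set

noncomputable section

/-- Assumption (H₀*) holds for the family of discounted-LPs: there are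
`γ₀ > 0` and a bounded set `B` such that for every `ε ∈ (0,γ₀]`, every optimal solution
`(v,σ)` of the discounted-LP with parameter `ε` belongs to `B`. -/
theorem H0star_for_discounted_LP
    (N : ℕ) (hN : 1 ≤ N) (Act : Fin N → Type)
    [∀ i, Fintype (Act i)] [∀ i, Nonempty (Act i)]
    (p : ∀ i : Fin N, Act i → Fin N → ℝ) (r : ∀ i : Fin N, Act i → ℝ)
    (γw : Fin N → ℝ)
    (hp0 : ∀ (i : Fin N) (a : Act i) (j : Fin N), 0 ≤ p i a j)
    (hp1 : ∀ (i : Fin N) (a : Act i), ∑ j, p i a j = 1)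
    (hγw : ∀ j, 0 < γw j) :
    ∃ γ0 > (0 : ℝ), ∃ B : Set ((Fin N → ℝ) × ((Σ i : Fin N, Act i) → ℝ)),
      Bornology.IsBounded B ∧
      ∀ ε ∈ Ioc (0 : ℝ) γ0, ∀ vs ∈ dFeas N Act p r ε,
        (∑ j, γw j * vs.1 j) = dVal N Act p r γw ε → vs ∈ B := by
  -- `R` dominates every reward, so the constant vector `R` is feasible for each `ε`.
  set R : ℝ := ∑ k : (Σ i : Fin N, Act i), |r k.1 k.2| with hR
  have hR0 : 0 ≤ R := Finset.sum_nonneg fun _ _ => abs_nonneg _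
  have hrR : ∀ i a, r i a ≤ R := fun i a =>
    (le_abs_self _).trans <|
      Finset.single_le_sum (f := fun k : (Σ i : Fin N, Act i) => |r k.1 k.2|)
        (fun _ _ => abs_nonneg _) (Finset.mem_univ ⟨i, a⟩)
  have hrow : ∀ (ε : ℝ) (v : Fin N → ℝ) (i : Fin N) (a : Act i),
      ∑ j, ((1 + ε) * (if i = j then (1 : ℝ) else 0) - p i a j) * v j
        = (1 + ε) * v i - ∑ j, p i a j * v j := by
    intro ε v i a
    simp [sub_mul, Finset.sum_sub_distrib]
  set C : ℝ := ∑ j, γw j * R with hC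
  refine ⟨1, one_pos, Icc 0 (fun j => C / γw j, fun k => 2 * (C / γw k.1) + |r k.1 k.2|),
    Metric.isBounded_Icc _ _, ?_⟩
  rintro ε ⟨hε0, hε1⟩ ⟨v, σ⟩ ⟨heq, hv, hσ⟩ hopt
  dsimp only at heq hv hσ hopt
  have hle : ∑ j, γw j * v j ≤ C := by
    rw [hopt]
    -- The real infimum is a genuine lower bound because the objective is nonnegative.
    refine csInf_le ⟨0, ?_⟩ ⟨(fun _ => R, fun k => ε * (R - r k.1 k.2)), ⟨?_, ?_, ?_⟩, rfl⟩
    · rintro _ ⟨q, hq, rfl⟩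
      exact Finset.sum_nonneg fun j _ => mul_nonneg (hγw j).le (hq.2.1 j)
    · intro i a
      have h := hrow ε (fun _ => R) i a
      have h1 : ∑ j, p i a j * R = R := by rw [← Finset.sum_mul, hp1, one_mul]
      rw [h1] at h
      dsimp only
      rw [h]
      ring
    · exact fun _ => hR0
    · exact fun k => mul_nonneg hε0.le (sub_nonneg.2 (hrR k.1 k.2))
  have hvC : ∀ j, v j ≤ C / γw j := by
    intro j
    rw [le_div_iff₀ (hγw j), mul_comm]
    exact (Finset.single_le_sum (f := fun j => γw j * v j)
      (fun j _ => mul_nonneg (hγw j).le (hv j)) (Finset.mem_univ j)).trans hle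
  refine ⟨⟨hv, hσ⟩, hvC, ?_⟩
  rintro ⟨i, a⟩
  have h := heq i a
  rw [hrow] at h
  have hpv : 0 ≤ ∑ j, p i a j * v j :=
    Finset.sum_nonneg fun j _ => mul_nonneg (hp0 i a j) (hv j)
  have hεv : ε * v i ≤ v i := mul_le_of_le_one_left (hv i) hε1
  have hεr : -(ε * r i a) ≤ |r i a| := by
    calc -(ε * r i a) ≤ |ε * r i a| := neg_le_abs _
      _ = ε * |r i a| := by rw [abs_mul, abs_of_pos hε0]
      _ ≤ |r i a| := mul_le_of_le_one_left (abs_nonneg _) hε1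
  have := hvC i
  dsimp only
  linarith
end
end

section
/- The ES-1 condition holds for the family of discounted-LPs written in the general perturbed form: there exists (x̂⁰, x̂¹) ∈ Θ₁ such that x̂⁰ⱼ > 0 for every j ∈ J₀ and x̂¹ⱼ > 0 for every j ∉ J₀, where J₀ and Θ₁ are the sets associated with the data A⁰, A¹, b⁰, b¹ given below. -/
/-!
Every `v`-index lies in `J₀`, since the point `(v, σ) = (1, 0)` belongs to `θ(0)`
(`A0mdp_mulVec_one_zero`). As `θ(0)` is a convex cone, it contains a point `y` positive on all of
`J₀` (`exists_theta0g_pos_on_J0g`), and `x⁰ = y + c (1, 0)` still has this property for every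
`c ≥ 0`. With `x¹ = (0, σ¹)` the first-order equation reads `σ¹ = v⁰ - r`, so choosing
`c > max |r|` makes every coordinate of `σ¹` positive, in particular those outside `J₀`.
-/

open Set Matrix

noncomputable section

/-- Unperturbed feasible set `θ(0) = {x : A⁰x = b⁰, x ≥ 0}` (general index types). -/
def theta0g {K n : Type} [Fintype K] [Fintype n]
    (A0 : Matrix K n ℝ) (b0 : K → ℝ) : Set (n → ℝ) :=
  {x | A0 *ᵥ x = b0 ∧ ∀ j, 0 ≤ x j}

/-- `J₀ = {j : ∃ x ∈ θ(0), xⱼ > 0}` (general index types). -/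
def J0g {K n : Type} [Fintype K] [Fintype n]
    (A0 : Matrix K n ℝ) (b0 : K → ℝ) : Set n :=
  {j | ∃ x ∈ theta0g A0 b0, 0 < x j}

/-- `Θ₁ = {(x⁰,x¹) : x⁰ ∈ θ(0), A⁰x¹ + A¹x⁰ = b¹, x¹ⱼ ≥ 0 ∀ j ∉ J₀}` (general index
types). -/
def Theta1g {K n : Type} [Fintype K] [Fintype n]
    (A0 A1 : Matrix K n ℝ) (b0 b1 : K → ℝ) : Set ((n → ℝ) × (n → ℝ)) :=
  {q | q.1 ∈ theta0g A0 b0 ∧ A0 *ᵥ q.2 + A1 *ᵥ q.1 = b1 ∧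
    ∀ j ∉ J0g A0 b0, 0 ≤ q.2 j}

/-- The matrix `A⁰ = [I − P | −I]` of the discounted-LP in general perturbed form:
the row indexed by `(i,a)` has entries `δ_{ij} − p_{iaj}` in the `v`-columns and is
minus the identity in the `σ`-columns. -/
def A0mdp (N : ℕ) (Act : Fin N → Type) [∀ i, DecidableEq (Act i)]
    (p : ∀ i : Fin N, Act i → Fin N → ℝ) :
    Matrix (Σ i : Fin N, Act i) ((Fin N) ⊕ (Σ i : Fin N, Act i)) ℝ :=
  fun k c =>
    match c with
    | Sum.inl j => (if k.1 = j then 1 else 0) - p k.1 k.2 j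
    | Sum.inr k' => if k' = k then -1 else 0

/-- The matrix `A¹ = [I | 0]` of the discounted-LP in general perturbed form. -/
def A1mdp (N : ℕ) (Act : Fin N → Type) :
    Matrix (Σ i : Fin N, Act i) ((Fin N) ⊕ (Σ i : Fin N, Act i)) ℝ :=
  fun k c =>
    match c with
    | Sum.inl j => if k.1 = j then 1 else 0
    | Sum.inr _ => 0

/-- The stationary point `(v, σ) = (1, 0)` solves `A⁰x = 0`, because the rows of `P` sum to one.
Adding a large multiple of it is what makes the first-order slack variables positive. -/
theorem A0mdp_mulVec_one_zero (N : ℕ) (Act : Fin N → Type)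
    [∀ i, Fintype (Act i)] [∀ i, DecidableEq (Act i)]
    (p : ∀ i : Fin N, Act i → Fin N → ℝ)
    (hp1 : ∀ (i : Fin N) (a : Act i), ∑ j, p i a j = 1) :
    A0mdp N Act p *ᵥ Sum.elim (fun _ => (1 : ℝ)) (fun _ => 0) = 0 := by
  ext k
  simp [Matrix.mulVec, dotProduct, A0mdp, Finset.sum_sub_distrib, hp1]

/-- `θ(0)` is a convex cone when `b⁰ = 0`, so adding up one witness per index of `J₀` yields a
single point of `θ(0)` that is positive on all of `J₀`. -/
theorem exists_theta0g_pos_on_J0g {K n : Type} [Fintype K] [Fintype n] (A0 : Matrix K n ℝ) :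
    ∃ x ∈ theta0g A0 0, ∀ j ∈ J0g A0 (0 : K → ℝ), 0 < x j := by
  have h : ∀ j, ∃ x ∈ theta0g A0 (0 : K → ℝ), j ∈ J0g A0 (0 : K → ℝ) → 0 < x j := by
    intro j
    by_cases hj : j ∈ J0g A0 (0 : K → ℝ)
    · obtain ⟨x, hx, hpos⟩ := hj
      exact ⟨x, hx, fun _ => hpos⟩
    · exact ⟨0, ⟨by simp, fun _ => le_rfl⟩, fun h => absurd h hj⟩
  choose y hy hpos using h
  refine ⟨∑ i, y i, ⟨?_, fun j => ?_⟩, fun j hj => ?_⟩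
  · rw [Matrix.mulVec_sum]
    exact Finset.sum_eq_zero fun i _ => (hy i).1
  · rw [Finset.sum_apply]
    exact Finset.sum_nonneg fun i _ => (hy i).2 j
  · rw [Finset.sum_apply]
    exact Finset.sum_pos' (fun i _ => (hy i).2 j) ⟨j, Finset.mem_univ j, hpos j hj⟩

/-- The ES-1 condition holds for the discounted-LP written in general
perturbed form (with `b⁰ = 0` and `b¹ = (r_{ia})`): there exists `(x̂⁰, x̂¹) ∈ Θ₁` with
`x̂⁰ⱼ > 0` for every `j ∈ J₀` and `x̂¹ⱼ > 0` for every `j ∉ J₀`. -/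
theorem ES1_for_discounted_LP
    (N : ℕ) (hN : 1 ≤ N) (Act : Fin N → Type)
    [∀ i, Fintype (Act i)] [∀ i, Nonempty (Act i)] [∀ i, DecidableEq (Act i)]
    (p : ∀ i : Fin N, Act i → Fin N → ℝ) (r : ∀ i : Fin N, Act i → ℝ)
    (hp0 : ∀ (i : Fin N) (a : Act i) (j : Fin N), 0 ≤ p i a j)
    (hp1 : ∀ (i : Fin N) (a : Act i), ∑ j, p i a j = 1) :
    ∃ x0hat x1hat : ((Fin N) ⊕ (Σ i : Fin N, Act i)) → ℝ,
      (x0hat, x1hat) ∈ Theta1g (A0mdp N Act p) (A1mdp N Act) 0 (fun k => r k.1 k.2) ∧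
      (∀ j ∈ J0g (A0mdp N Act p) (0 : (Σ i : Fin N, Act i) → ℝ), 0 < x0hat j) ∧
      (∀ j ∉ J0g (A0mdp N Act p) (0 : (Σ i : Fin N, Act i) → ℝ), 0 < x1hat j) := by
  classical
  have he := A0mdp_mulVec_one_zero N Act p hp1
  set e : ((Fin N) ⊕ (Σ i : Fin N, Act i)) → ℝ := Sum.elim (fun _ => 1) (fun _ => 0) with he_def
  have he0 : ∀ j, 0 ≤ e j := by
    rintro (j | j) <;> simp [he_def]
  have hinl : ∀ i, Sum.inl i ∈ J0g (A0mdp N Act p) (0 : (Σ i : Fin N, Act i) → ℝ) :=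
    fun i => ⟨e, ⟨he, he0⟩, by simp [he_def]⟩
  obtain ⟨y, ⟨hyA, hy0⟩, hypos⟩ := exists_theta0g_pos_on_J0g (A0mdp N Act p)
  set c : ℝ := 1 + ∑ k : (Σ i : Fin N, Act i), |r k.1 k.2| with hc_def
  have hc0 : 0 ≤ c := by positivity
  have hcr : ∀ k : (Σ i : Fin N, Act i), r k.1 k.2 < c := by
    intro k
    have h1 := Finset.single_le_sum (f := fun k : (Σ i : Fin N, Act i) => |r k.1 k.2|)
      (fun k _ => abs_nonneg _) (Finset.mem_univ k)
    have h2 := le_abs_self (r k.1 k.2)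
    linarith
  have hσ : ∀ k : (Σ i : Fin N, Act i), 0 < y (Sum.inl k.1) + c - r k.1 k.2 := fun k => by
    linarith [hy0 (Sum.inl k.1), hcr k]
  have hx1 : ∀ j ∉ J0g (A0mdp N Act p) (0 : (Σ i : Fin N, Act i) → ℝ),
      0 < (Sum.elim (fun _ => 0) (fun k => y (Sum.inl k.1) + c - r k.1 k.2) :
        ((Fin N) ⊕ (Σ i : Fin N, Act i)) → ℝ) j := by
    rintro (i | k) hj
    · exact absurd (hinl i) hj
    · exact hσ k
  refine ⟨y + c • e, Sum.elim (fun _ => 0) (fun k => y (Sum.inl k.1) + c - r k.1 k.2),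
    ⟨⟨?_, fun j => ?_⟩, ?_, fun j hj => (hx1 j hj).le⟩, fun j hj => ?_, hx1⟩
  · simp only [Matrix.mulVec_add, Matrix.mulVec_smul, hyA, he, smul_zero, add_zero]
  · exact add_nonneg (hy0 j) (mul_nonneg hc0 (he0 j))
  · ext k
    simp [Matrix.mulVec, dotProduct, A0mdp, A1mdp, he_def]
  · exact add_pos_of_pos_of_nonneg (hypos j hj) (mul_nonneg hc0 (he0 j))
end
end
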